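/- arXiv:2605.20526 — 3 statements merged into one kernel-verified Lean document; each statement's English description precedes it below -/
import Mathlib

section
/- Let H be a finite connected simple graph with at least two vertices and let σ → τ be an arc of the state digraph D(H). Then L_σ ∪ X_σ ⊆ L_τ; in particular |L_τ| > |L_σ|. -/
/-!
No edge joins the two sides of a state, since each nonempty side is a maximal connected set
outside the ball. Hence a set that avoids the ball of a state and whose vertices all descend,
inside the set, to one vertex of a side lies entirely in that side.
For an arc `σ → τ`, the distance condition makes the balls disjoint, so `X_τ`, which contains
`c_τ ∈ R_σ`, lies in `R_σ`. Therefore `L_σ ∪ X_σ` misses `X_τ`. From any of its vertices a geodesic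
to `c_σ` stays inside `L_σ ∪ X_σ`, as it cannot step from `L_σ` to `R_σ`; since `c_σ ∈ L_τ`, the
whole set lies in `L_τ`. Strictness comes from `c_σ ∈ L_τ \ L_σ`.
-/

open scoped Classical

namespace BD

variable {V : Type*}

/-- The ball of radius `p` around `v`: all vertices at graph distance at most `p`. -/
def ball (G : SimpleGraph V) (v : V) (p : ℕ) : Set V := {x | G.dist v x ≤ p}

/-- Open neighborhood of a vertex set: vertices outside `S` adjacent to some vertex of `S`. -/
def nbhd (G : SimpleGraph V) (S : Set V) : Set V :=
  {x | x ∉ S ∧ ∃ y ∈ S, G.Adj y x}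

/-- A broadcast is dominating if every vertex lies in the ball of some active vertex. -/
def Dominating (G : SimpleGraph V) (f : V → ℕ) : Prop :=
  ∀ u, ∃ v, 0 < f v ∧ u ∈ ball G v (f v)

/-- A broadcast is efficient if the balls of distinct active vertices are pairwise disjoint. -/
def Efficient (G : SimpleGraph V) (f : V → ℕ) : Prop :=
  ∀ u v, 0 < f u → 0 < f v → u ≠ v → Disjoint (ball G u (f u)) (ball G v (f v))

/-- The cost of a broadcast: the sum of its values. -/
def cost [Fintype V] (f : V → ℕ) : ℕ := ∑ v, f v

/-- Adjacency in the domination graph of a broadcast: distinct active vertices whose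
balls are joined by an edge of `G`. -/
def DomAdj (G : SimpleGraph V) (f : V → ℕ) (u v : V) : Prop :=
  0 < f u ∧ 0 < f v ∧ u ≠ v ∧ ∃ x ∈ ball G u (f u), ∃ y ∈ ball G v (f v), G.Adj x y

/-- The domination graph of the broadcast `f` is a path: the active vertices can be
enumerated as `a 0, …, a (t-1)` so that domination-graph adjacency is exactly
consecutiveness in this enumeration. -/
def PathShaped (G : SimpleGraph V) (f : V → ℕ) : Prop :=
  ∃ (t : ℕ) (a : ℕ → V), 1 ≤ t ∧
    (∀ i j, i < t → j < t → a i = a j → i = j) ∧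
    (∀ v, 0 < f v ↔ ∃ i, i < t ∧ a i = v) ∧
    (∀ i j, i < t → j < t → (DomAdj G f (a i) (a j) ↔ (i + 1 = j ∨ j + 1 = i)))

/-- `γ_path`: minimum cost of an efficient dominating broadcast whose domination
graph is a path. -/
noncomputable def gammaPath (G : SimpleGraph V) [Fintype V] : ℕ :=
  sInf {c | ∃ f, Dominating G f ∧ Efficient G f ∧ PathShaped G f ∧ cost f = c}

/-- `γ_b`: minimum cost of a dominating broadcast. -/
noncomputable def gammaB (G : SimpleGraph V) [Fintype V] : ℕ :=
  sInf {c | ∃ f, Dominating G f ∧ cost f = c}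

/-- Eccentricity of a vertex. -/
noncomputable def ecc [Fintype V] (G : SimpleGraph V) (v : V) : ℕ :=
  Finset.univ.sup (fun x => G.dist v x)

/-- Radius of a graph. -/
noncomputable def radius [Fintype V] [Nonempty V] (G : SimpleGraph V) : ℕ :=
  Finset.univ.inf' Finset.univ_nonempty (ecc G)

/-- `C` is a connected component (as a vertex set) of the subgraph of `G` induced on `S`:
a maximal nonempty connected subset of `S`. -/
def IsCompOf (G : SimpleGraph V) (S C : Set V) : Prop :=
  C.Nonempty ∧ C ⊆ S ∧ (G.induce C).Connected ∧
    ∀ D : Set V, C ⊆ D → D ⊆ S → (G.induce D).Connected → D = C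

/-- A state of the state digraph `D(H)`: an oriented ball `(c, r)` together with its
left and right residual sides `L`, `R`, which partition the complement of the ball and
each of which is empty or a connected component of the residual graph. -/
structure GState (G : SimpleGraph V) where
  c : V
  r : ℕ
  L : Set V
  R : Set V
  r_pos : 1 ≤ r
  disj : L ∩ R = ∅
  union : L ∪ R = (ball G c r)ᶜ
  hL : L = ∅ ∨ IsCompOf G ((ball G c r)ᶜ) L
  hR : R = ∅ ∨ IsCompOf G ((ball G c r)ᶜ) R

/-- The ball of a state. -/
def Xball {G : SimpleGraph V} (σ : GState G) : Set V := ball G σ.c σ.r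

/-- The arc relation of the state digraph `D(H)`: conditions (A1)–(A4). -/
def Arc {G : SimpleGraph V} (σ τ : GState G) : Prop :=
  σ.R.Nonempty ∧ τ.L.Nonempty ∧
  G.dist σ.c τ.c = σ.r + τ.r + 1 ∧
  τ.c ∈ σ.R ∧ σ.c ∈ τ.L ∧
  nbhd G (Xball σ) ∩ σ.R ⊆ Xball τ ∧
  nbhd G (Xball τ) ∩ τ.L ⊆ Xball σ

end BD

namespace BD

variable {V : Type*} {G : SimpleGraph V}

theorem IsCompOf.mem_of_adj {S C : Set V} (h : IsCompOf G S C) {x y : V}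
    (hx : x ∈ C) (hy : y ∈ S) (hxy : G.Adj x y) : y ∈ C := by
  obtain ⟨-, hCS, hconn, hmax⟩ := h
  have hD : (G.induce (C ∪ {x, y})).Connected :=
    SimpleGraph.induce_union_connected hconn.preconnected
      (SimpleGraph.induce_pair_connected_of_adj hxy).preconnected
      ⟨x, hx, by simp⟩
  have := hmax (C ∪ {x, y}) Set.subset_union_left (by
    rintro z (hz | rfl | rfl)
    · exact hCS hz
    · exact hCS hx
    · exact hy) hD
  rw [← this]
  simp

theorem GState.mem_L_of_adj (σ : GState G) {x y : V} (hx : x ∉ Xball σ)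
    (hyx : G.Adj y x) (hy : y ∈ σ.L) : x ∈ σ.L := by
  rcases σ.hL with h | h
  · simp [h] at hy
  · exact h.mem_of_adj hy hx hyx

theorem GState.mem_R_of_adj (σ : GState G) {x y : V} (hx : x ∉ Xball σ)
    (hyx : G.Adj y x) (hy : y ∈ σ.R) : x ∈ σ.R := by
  rcases σ.hR with h | h
  · simp [h] at hy
  · exact h.mem_of_adj hy hx hyx

theorem exists_adj_dist_lt (hG : G.Connected) {c x : V} (hne : x ≠ c) :
    ∃ y, G.Adj y x ∧ G.dist c y < G.dist c x := by
  obtain ⟨p, hp⟩ := hG.exists_walk_length_eq_dist x c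
  cases p with
  | nil => exact absurd rfl hne
  | cons h q =>
    refine ⟨_, h.symm, ?_⟩
    have := SimpleGraph.dist_le q
    rw [SimpleGraph.Walk.length_cons] at hp
    rw [G.dist_comm (u := c), G.dist_comm (u := c)]
    omega

/-- If `S` is closed under stepping to a neighbour closer to `c`, and membership in `T` passes
from a vertex to its neighbours in `S`, then `c ∈ T` forces `S ⊆ T`: induct on the distance
to `c`. -/
theorem propagate (hG : G.Connected) {c : V} {S T : Set V}
    (hS : ∀ x y, x ∈ S → G.Adj y x → G.dist c y < G.dist c x → y ∈ S)
    (hc : c ∈ T) (hT : ∀ x y, x ∈ S → G.Adj y x → y ∈ T → x ∈ T) : S ⊆ T := by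
  intro x hx
  induction hn : G.dist c x using Nat.strong_induction_on generalizing x with
  | _ n ih =>
    by_cases hne : x = c
    · exact hne ▸ hc
    · obtain ⟨y, hyx, hlt⟩ := exists_adj_dist_lt hG hne
      exact hT x y hx hyx (ih _ (hn ▸ hlt) (hS x y hx hyx hlt) rfl)

end BD

/-- If `σ → τ` is an arc of the state digraph `D(H)`,
then `L_σ ∪ X_σ ⊆ L_τ`; in particular `|L_τ| > |L_σ|`. -/
theorem arc_left_growth {V : Type*} [Fintype V] (H : SimpleGraph V)
    (hconn : H.Connected) (hcard : 1 < Fintype.card V)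
    (σ τ : BD.GState H) (h : BD.Arc σ τ) :
    σ.L ∪ BD.Xball σ ⊆ τ.L ∧ σ.L.ncard < τ.L.ncard := by
  obtain ⟨-, -, hd, hcτ, hcσ, -, -⟩ := h
  have hdisj : ∀ x, x ∈ BD.Xball σ → x ∉ BD.Xball τ := by
    intro x h1 h2
    have h3 : H.dist σ.c x ≤ σ.r := h1
    have h4 : H.dist τ.c x ≤ τ.r := h2
    have := hconn.dist_triangle (u := σ.c) (v := x) (w := τ.c)
    rw [H.dist_comm (u := x)] at this
    omega
  have hXτ : ∀ x ∈ BD.Xball τ, x ∈ σ.R :=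
    BD.propagate hconn (fun x y hx hyx hlt => (Nat.le_of_lt hlt).trans hx) hcτ
      (fun x y hx hyx hy => σ.mem_R_of_adj (fun h => hdisj x h hx) hyx hy)
  have hsub : σ.L ∪ BD.Xball σ ⊆ τ.L := by
    refine BD.propagate hconn (c := σ.c) ?_ hcσ ?_
    · rintro x y (hx | hx) hyx hlt
      · by_contra hy
        rw [Set.mem_union, not_or] at hy
        exact hy.1 (σ.mem_L_of_adj hy.2 hyx.symm hx)
      · exact Or.inr ((Nat.le_of_lt hlt).trans hx)
    · rintro x y hx hyx hy
      refine τ.mem_L_of_adj (fun hxτ => ?_) hyx hy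
      rcases hx with hx | hx
      · exact Set.disjoint_left.1 (Set.disjoint_iff_inter_eq_empty.2 σ.disj) hx (hXτ x hxτ)
      · exact hdisj x hx hxτ
  refine ⟨hsub, Set.ncard_lt_ncard ?_ (Set.toFinite _)⟩
  have hc : σ.c ∈ BD.Xball σ := by simp [BD.Xball, BD.ball]
  refine ⟨Set.subset_union_left.trans hsub, fun hle => ?_⟩
  have : σ.c ∈ (BD.ball H σ.c σ.r)ᶜ := σ.union ▸ Or.inl (hle hcσ)
  exact this hc
end

section
/- Let H be a finite connected simple graph with at least two vertices and let P = σ₁, …, σ_t be a directed path in the state digraph D(H) from a source state to a sink state. Define the broadcast f_P by f_P(c_{σ_i}) = r_{σ_i} for 1 ≤ i ≤ t and f_P(v) = 0 for all other vertices. Then f_P is an efficient dominating broadcast of H whose domination graph is a path, and its cost equals Σ_{i=1}^t r_{σ_i}. -/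
/-!
A state splits the vertex set into three disjoint pieces `L`, `X`, `R` (`X` its ball), and maximality
of components forbids edges between `L` and `R` (`GState.not_adj`). Along an arc `σ → τ` the balls
are disjoint because `dist(c_σ, c_τ) = r_σ + r_τ + 1`. As balls are connected, `c_τ ∈ R_σ` and
`c_σ ∈ L_τ` then give `X_τ ⊆ R_σ` and `X_σ ⊆ L_τ`.

The central fact is `Arc.left_eq`: `L_τ = L_σ ∪ X_σ`. It amounts to `R_σ ∩ L_τ = ∅` and
`L_σ ∩ R_τ = ∅`. Each of these two sets is closed under taking neighbours, the first because the
frontiers `N(X_σ) ∩ R_σ` and `N(X_τ) ∩ L_τ` lie in `X_τ` and `X_σ`, the second because there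
are no edges between the two sides of a state; since `H` is connected and neither set is everything,
both are empty.

Hence `L_{σ_i}` is the union of the balls before `σ_i`, starting from `L_{σ_0} = ∅`. The balls are
therefore pairwise disjoint, and at the sink they exhaust the graph. Consecutive balls are joined by
an edge of a geodesic between their centers. Balls `i` and `j` with `i + 1 < j` lie on opposite
sides of `σ_{i+1}`, so no edge joins them: the domination graph is a path.
-/

open scoped Classical

namespace BD

/-! ### Connectedness of graphs and balls -/

/-- In a connected graph a neighbour-closed set that misses a vertex is empty. -/
lemma eq_empty_of_adj_closed {V : Type*} {G : SimpleGraph V} (hG : G.Connected) {S : Set V}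
    (hS : ∀ x ∈ S, ∀ y, G.Adj x y → y ∈ S) {z : V} (hz : z ∉ S) : S = ∅ := by
  have key : ∀ {x y : V}, G.Walk x y → x ∈ S → y ∈ S := by
    intro x y p
    induction p with
    | nil => exact id
    | cons h _ ih => exact fun hx => ih (hS _ hx _ h)
  refine Set.eq_empty_iff_forall_notMem.2 fun x hx => hz ?_
  obtain ⟨p⟩ := hG x z
  exact key p hx

lemma exists_adj_dist_eq {V : Type*} {G : SimpleGraph V} (hG : G.Connected) {c x : V} {n : ℕ}
    (h : G.dist c x = n + 1) : ∃ y, G.Adj y x ∧ G.dist c y = n := by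
  obtain ⟨p, hp⟩ := hG.exists_walk_length_eq_dist x c
  rw [G.dist_comm, h] at hp
  cases p with
  | nil => simp at hp
  | @cons _ y _ hxy q =>
    have h1 : G.dist y c ≤ q.length := SimpleGraph.dist_le q
    have h2 : G.dist c x ≤ G.dist c y + G.dist y x := hG.dist_triangle
    have h3 : G.dist y x = 1 := SimpleGraph.dist_eq_one_iff_adj.2 hxy.symm
    rw [SimpleGraph.Walk.length_cons] at hp
    rw [G.dist_comm] at h1
    exact ⟨y, hxy.symm, by omega⟩

/-- Connectedness of balls: a set containing the center and closed under stepping to neighbours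
inside the ball contains the ball. -/
lemma ball_subset_of_adj_closed {V : Type*} {G : SimpleGraph V} (hG : G.Connected) {c : V} {r : ℕ}
    {S : Set V} (hc : c ∈ S) (hS : ∀ x ∈ S, ∀ y ∈ ball G c r, G.Adj x y → y ∈ S) :
    ball G c r ⊆ S := by
  have key : ∀ n x, G.dist c x = n → n ≤ r → x ∈ S := by
    intro n
    induction n with
    | zero =>
      intro x hx _
      rwa [← hG.dist_eq_zero_iff.1 hx]
    | succ n ih =>
      intro x hx hn
      obtain ⟨y, hyx, hy⟩ := exists_adj_dist_eq hG hx
      refine hS y (ih y hy (by omega)) x ?_ hyx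
      change G.dist c x ≤ r
      omega
  exact fun x hx => key _ x rfl hx

/-! ### The two sides of a state -/

/-- There are no edges between the two sides of a state: otherwise adding the far endpoint to `L`
would contradict the maximality of `L`. -/
lemma GState.not_adj {V : Type*} {G : SimpleGraph V} (σ : GState G) {x y : V} (hx : x ∈ σ.L)
    (hy : y ∈ σ.R) : ¬ G.Adj x y := by
  intro h
  rcases σ.hL with hL | ⟨-, hsub, hcon, hmax⟩
  · simp [hL] at hx
  have hD := hmax (σ.L ∪ {x, y}) Set.subset_union_left
    (Set.union_subset hsub ?_)
    (SimpleGraph.induce_union_connected hcon.preconnected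
      (SimpleGraph.induce_pair_connected_of_adj h).preconnected ⟨x, hx, by simp⟩)
  · have hyL : y ∈ σ.L := by
      rw [← hD]
      simp
    exact (σ.disj ▸ (⟨hyL, hy⟩ : y ∈ σ.L ∩ σ.R) : y ∈ (∅ : Set V))
  · rintro z (rfl | rfl)
    · exact hsub hx
    · exact σ.union ▸ Or.inr hy

lemma GState.notMem_right {V : Type*} {G : SimpleGraph V} (σ : GState G) {x : V} (hx : x ∈ σ.L) :
    x ∉ σ.R := fun h => (σ.disj ▸ (⟨hx, h⟩ : x ∈ σ.L ∩ σ.R) : x ∈ (∅ : Set V))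

lemma GState.notMem_ball_of_left {V : Type*} {G : SimpleGraph V} (σ : GState G) {x : V}
    (hx : x ∈ σ.L) : x ∉ Xball σ := by
  have h : x ∈ (ball G σ.c σ.r)ᶜ := σ.union ▸ Or.inl hx
  exact h

lemma GState.notMem_ball_of_right {V : Type*} {G : SimpleGraph V} (σ : GState G) {x : V}
    (hx : x ∈ σ.R) : x ∉ Xball σ := by
  have h : x ∈ (ball G σ.c σ.r)ᶜ := σ.union ▸ Or.inr hx
  exact h

lemma GState.cover {V : Type*} {G : SimpleGraph V} (σ : GState G) (x : V) :
    x ∈ σ.L ∨ x ∈ Xball σ ∨ x ∈ σ.R := by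
  by_cases h : x ∈ Xball σ
  · exact Or.inr (Or.inl h)
  · have h' : x ∈ σ.L ∪ σ.R := by
      rw [σ.union]
      exact h
    exact h'.imp id Or.inr

lemma GState.center_mem {V : Type*} {G : SimpleGraph V} (σ : GState G) : σ.c ∈ Xball σ := by
  simp [Xball, ball]

/-! ### Arcs of the state digraph -/

lemma Arc.disjoint {V : Type*} {G : SimpleGraph V} (hG : G.Connected) {σ τ : GState G}
    (h : Arc σ τ) {x : V} (hx : x ∈ Xball σ) : x ∉ Xball τ := by
  obtain ⟨-, -, hd, -⟩ := h
  intro hx'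
  have h1 : G.dist σ.c x ≤ σ.r := hx
  have h2 : G.dist τ.c x ≤ τ.r := hx'
  have h3 : G.dist σ.c τ.c ≤ G.dist σ.c x + G.dist x τ.c := hG.dist_triangle
  rw [G.dist_comm (u := x)] at h3
  omega

lemma Arc.ball_subset_right {V : Type*} {G : SimpleGraph V} (hG : G.Connected) {σ τ : GState G}
    (h : Arc σ τ) : Xball τ ⊆ σ.R := by
  refine ball_subset_of_adj_closed hG h.2.2.2.1 fun x hx y hy hxy => ?_
  rcases σ.cover y with hL | hX | hR
  · exact absurd hxy.symm (σ.not_adj hL hx)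
  · exact absurd hy (h.disjoint hG hX)
  · exact hR

lemma Arc.ball_subset_left {V : Type*} {G : SimpleGraph V} (hG : G.Connected) {σ τ : GState G}
    (h : Arc σ τ) : Xball σ ⊆ τ.L := by
  refine ball_subset_of_adj_closed hG h.2.2.2.2.1 fun x hx y hy hxy => ?_
  rcases τ.cover y with hL | hX | hR
  · exact hL
  · exact absurd hX (h.disjoint hG hy)
  · exact absurd hxy (τ.not_adj hx hR)

/-- The frontier conditions of an arc leave no vertex strictly between two consecutive balls. -/
lemma Arc.right_inter_left {V : Type*} {G : SimpleGraph V} (hG : G.Connected) {σ τ : GState G}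
    (h : Arc σ τ) : σ.R ∩ τ.L = ∅ := by
  obtain ⟨hF, hF'⟩ := h.2.2.2.2.2
  refine eq_empty_of_adj_closed hG (z := σ.c) ?_
    (fun hz => σ.notMem_ball_of_right hz.1 σ.center_mem)
  rintro x ⟨hxR, hxL⟩ y hxy
  have hyσ : y ∉ Xball σ := fun hy => τ.notMem_ball_of_left hxL
    (hF ⟨⟨σ.notMem_ball_of_right hxR, y, hy, hxy.symm⟩, hxR⟩)
  have hyτ : y ∉ Xball τ := fun hy => σ.notMem_ball_of_right hxR
    (hF' ⟨⟨τ.notMem_ball_of_left hxL, y, hy, hxy.symm⟩, hxL⟩)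
  constructor
  · rcases σ.cover y with hL | hX | hR
    · exact absurd hxy.symm (σ.not_adj hL hxR)
    · exact absurd hX hyσ
    · exact hR
  · rcases τ.cover y with hL | hX | hR
    · exact hL
    · exact absurd hX hyτ
    · exact absurd hxy (τ.not_adj hxL hR)

lemma Arc.left_inter_right {V : Type*} {G : SimpleGraph V} (hG : G.Connected) {σ τ : GState G}
    (h : Arc σ τ) : σ.L ∩ τ.R = ∅ := by
  refine eq_empty_of_adj_closed hG (z := σ.c) ?_
    (fun hz => σ.notMem_ball_of_left hz.1 σ.center_mem)
  rintro x ⟨hxL, hxR⟩ y hxy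
  constructor
  · rcases σ.cover y with hL | hX | hR
    · exact hL
    · exact absurd hxy.symm (τ.not_adj (h.ball_subset_left hG hX) hxR)
    · exact absurd hxy (σ.not_adj hxL hR)
  · rcases τ.cover y with hL | hX | hR
    · exact absurd hxy.symm (τ.not_adj hL hxR)
    · exact absurd hxy (σ.not_adj hxL (h.ball_subset_right hG hX))
    · exact hR

/-- Moving along an arc, the left side grows by exactly the ball that is left behind. -/
lemma Arc.left_eq {V : Type*} {G : SimpleGraph V} (hG : G.Connected) {σ τ : GState G}
    (h : Arc σ τ) : τ.L = σ.L ∪ Xball σ := by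
  ext x
  constructor
  · intro hx
    rcases σ.cover x with hL | hX | hR
    · exact Or.inl hL
    · exact Or.inr hX
    · have hmem : x ∈ σ.R ∩ τ.L := ⟨hR, hx⟩
      simp [h.right_inter_left hG] at hmem
  · rintro (hx | hx)
    · rcases τ.cover x with hL | hX | hR
      · exact hL
      · exact absurd (h.ball_subset_right hG hX) (σ.notMem_right hx)
      · have hmem : x ∈ σ.L ∩ τ.R := ⟨hx, hR⟩
        simp [h.left_inter_right hG] at hmem
    · exact h.ball_subset_left hG hx

/-- Some edge of a geodesic between the centers leaves the first ball and enters the second. -/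
lemma Arc.exists_adj {V : Type*} {G : SimpleGraph V} (hG : G.Connected) {σ τ : GState G}
    (h : Arc σ τ) : ∃ x ∈ Xball σ, ∃ y ∈ Xball τ, G.Adj x y := by
  have key : ∀ n y, G.dist σ.c y = σ.r + 1 + n → ∃ z, G.dist σ.c z = σ.r + 1 ∧ G.dist z y ≤ n := by
    intro n
    induction n with
    | zero => exact fun y hy => ⟨y, hy, by simp⟩
    | succ n ih =>
      intro y hy
      obtain ⟨w, hwy, hw⟩ := exists_adj_dist_eq hG (n := σ.r + 1 + n) hy
      obtain ⟨z, hz, hzw⟩ := ih w hw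
      have h1 : G.dist z y ≤ G.dist z w + G.dist w y := hG.dist_triangle
      rw [SimpleGraph.dist_eq_one_iff_adj.2 hwy] at h1
      exact ⟨z, hz, by omega⟩
  obtain ⟨y, hy, hyτ⟩ := key τ.r τ.c (by have := h.2.2.1; omega)
  obtain ⟨x, hxy, hx⟩ := exists_adj_dist_eq hG hy
  refine ⟨x, hx.le, y, ?_, hxy⟩
  change G.dist τ.c y ≤ τ.r
  rwa [G.dist_comm]

/-! ### Paths in the state digraph -/

/-- On a directed path from a source state, the left side of the `i`-th state is the union of the
preceding balls. -/
lemma mem_left_iff {V : Type*} {G : SimpleGraph V} (hG : G.Connected) {t : ℕ} {σ : ℕ → GState G}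
    (hpath : ∀ i, i + 1 < t → Arc (σ i) (σ (i + 1))) (hsource : (σ 0).L = ∅) (x : V) :
    ∀ i, i < t → (x ∈ (σ i).L ↔ ∃ j < i, x ∈ Xball (σ j)) := by
  intro i
  induction i with
  | zero => simp [hsource]
  | succ i ih =>
    intro hi
    rw [(hpath i hi).left_eq hG, Set.mem_union, ih (by omega), Nat.exists_lt_succ_right]

end BD

/-- The broadcast `f_P` induced by a source-to-sink directed path in `D(H)`
(assigning `r_{σ_i}` to `c_{σ_i}` and `0` elsewhere) is an efficient dominating broadcast
of `H` whose domination graph is a path, and its cost is `Σ_i r_{σ_i}`. -/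
theorem path_gives_broadcast {V : Type*} [Fintype V] (H : SimpleGraph V)
    (hconn : H.Connected) (hcard : 1 < Fintype.card V)
    (t : ℕ) (ht : 1 ≤ t) (σ : ℕ → BD.GState H)
    (hpath : ∀ i, i + 1 < t → BD.Arc (σ i) (σ (i + 1)))
    (hsource : (σ 0).L = ∅) (hsink : (σ (t - 1)).R = ∅) :
    ∃ f : V → ℕ,
      (∀ i, i < t → f ((σ i).c) = (σ i).r) ∧
      (∀ v, (∀ i, i < t → (σ i).c ≠ v) → f v = 0) ∧
      BD.Dominating H f ∧ BD.Efficient H f ∧ BD.PathShaped H f ∧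
      BD.cost f = ∑ i ∈ Finset.range t, (σ i).r := by
  have hleft := fun x i hi => BD.mem_left_iff hconn hpath hsource x i hi
  have hdisj : ∀ i j, i < j → j < t → ∀ x ∈ BD.Xball (σ i), x ∉ BD.Xball (σ j) :=
    fun i j hij hj x hx => (σ j).notMem_ball_of_left ((hleft x j hj).2 ⟨i, hij, hx⟩)
  have hinj : ∀ i j, i < t → j < t → (σ i).c = (σ j).c → i = j := by
    intro i j hi hj h
    by_contra hne
    rcases lt_or_gt_of_ne hne with hlt | hlt
    · exact hdisj i j hlt hj _ (σ i).center_mem (h ▸ (σ j).center_mem)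
    · exact hdisj j i hlt hi _ (σ j).center_mem (h ▸ (σ i).center_mem)
  have hnadj : ∀ i j, i + 1 < j → j < t → ∀ x ∈ BD.Xball (σ i), ∀ y ∈ BD.Xball (σ j),
      ¬ H.Adj x y := by
    intro i j hij hj x hx y hy
    have hxL := (hleft x (i + 1) (by omega)).2 ⟨i, by omega, hx⟩
    -- The `j`-th ball misses every earlier one, hence also the left side of state `i + 1`.
    have hyR : y ∈ (σ (i + 1)).R := by
      rcases (σ (i + 1)).cover y with hL | hX | hR
      · obtain ⟨k, hk, hyk⟩ := (hleft y (i + 1) (by omega)).1 hL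
        exact absurd hy (hdisj k j (by omega) hj y hyk)
      · exact absurd hy (hdisj (i + 1) j hij hj y hX)
      · exact hR
    exact (σ (i + 1)).not_adj hxL hyR
  -- Centers are distinct on the path, so at most one summand is nonzero.
  let f : V → ℕ := fun v => ∑ i ∈ Finset.range t, if (σ i).c = v then (σ i).r else 0
  have hf : ∀ i, i < t → f ((σ i).c) = (σ i).r := by
    intro i hi
    refine (Finset.sum_eq_single_of_mem i (Finset.mem_range.2 hi) fun j hj hji => ?_).trans
      (if_pos rfl)
    exact if_neg fun h => hji (hinj j i (Finset.mem_range.1 hj) hi h)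
  have hf0 : ∀ v, (∀ i, i < t → (σ i).c ≠ v) → f v = 0 := fun v hv =>
    Finset.sum_eq_zero fun i hi => if_neg (hv i (Finset.mem_range.1 hi))
  have hact : ∀ v, 0 < f v ↔ ∃ i, i < t ∧ (σ i).c = v := by
    intro v
    constructor
    · intro hv
      by_contra! h
      exact hv.ne' (hf0 v h)
    · rintro ⟨i, hi, rfl⟩
      rw [hf i hi]
      exact (σ i).r_pos
  have hball : ∀ i, i < t → BD.ball H (σ i).c (f (σ i).c) = BD.Xball (σ i) := by
    intro i hi
    rw [hf i hi]
    rfl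
  refine ⟨f, hf, hf0, ?_, ?_, ⟨t, fun i => (σ i).c, ht, hinj, hact, ?_⟩, ?_⟩
  · intro u
    obtain ⟨i, hi, hu⟩ : ∃ i, i < t ∧ u ∈ BD.Xball (σ i) := by
      rcases (σ (t - 1)).cover u with hL | hX | hR
      · obtain ⟨j, hj, hu⟩ := (hleft u (t - 1) (by omega)).1 hL
        exact ⟨j, by omega, hu⟩
      · exact ⟨t - 1, by omega, hX⟩
      · simp [hsink] at hR
    exact ⟨(σ i).c, (hact _).2 ⟨i, hi, rfl⟩, (hball i hi).symm ▸ hu⟩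
  · intro u v hu hv huv
    obtain ⟨i, hi, rfl⟩ := (hact u).1 hu
    obtain ⟨j, hj, rfl⟩ := (hact v).1 hv
    rw [hball i hi, hball j hj, Set.disjoint_left]
    intro x hx hx'
    rcases lt_trichotomy i j with hlt | rfl | hlt
    · exact hdisj i j hlt hj x hx hx'
    · exact huv rfl
    · exact hdisj j i hlt hi x hx' hx
  · intro i j hi hj
    unfold BD.DomAdj
    rw [hball i hi, hball j hj]
    constructor
    · rintro ⟨-, -, hne, x, hx, y, hy, hxy⟩
      have hij : i ≠ j := fun h => hne (by rw [h])
      by_contra hcon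
      rcases lt_or_gt_of_ne hij with hlt | hlt
      · exact hnadj i j (by omega) hj x hx y hy hxy
      · exact hnadj j i (by omega) hi y hy x hx hxy.symm
    · intro h
      refine ⟨(hact _).2 ⟨i, hi, rfl⟩, (hact _).2 ⟨j, hj, rfl⟩, fun hc => ?_, ?_⟩
      · have := hinj i j hi hj hc
        omega
      · rcases h with rfl | rfl
        · exact (hpath i hj).exists_adj hconn
        · obtain ⟨x, hx, y, hy, hxy⟩ := (hpath j hi).exists_adj hconn
          exact ⟨y, hy, x, hx, hxy.symm⟩
  · change ∑ v, ∑ i ∈ Finset.range t, (if (σ i).c = v then (σ i).r else 0) = _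
    rw [Finset.sum_comm]
    simp
end

section
/- Let H be a finite connected simple graph with at least two vertices and let f be an efficient dominating broadcast of H whose domination graph H_f is a path. Then there exists a directed path σ₁, …, σ_t in the state digraph D(H) from a source state to a sink state such that Σ_{i=1}^t r_{σ_i} = cost(f). -/
/-!
Let `a 0, …, a (t - 1)` enumerate the active vertices along the domination path and let `X j` be the
ball of `a j`. Domination and efficiency say that the `X j` partition the vertex set, and
path-shapedness says that an edge of `H` joins `X i` and `X j` (`i ≠ j`) iff `i` and `j` are
consecutive. The `i`-th state has centre `a i`, radius `f (a i)`, left side `⋃ j < i, X j` and right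
side `⋃ j > i, X j`.

Each side is connected when nonempty, being a chain of balls with consecutive ones joined by an edge
(`span_connected`), and no edge leads from one side to the other, so each is a component of the
complement of `X i` (`isCompOf_of_no_edge`). For the arcs, the neighbours of `X i` on its right lie in
`X (i + 1)`, symmetrically for the left, and two disjoint balls joined by an edge have their centres
at distance exactly the sum of the radii plus one (`dist_eq_of_disjoint_of_adj`). The radii sum to the
cost because the enumeration is a bijection onto the support of `f`.
-/

open scoped Classical

namespace BD

variable {V : Type*}

lemma center_mem_ball (G : SimpleGraph V) (v : V) (p : ℕ) : v ∈ ball G v p := by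
  simp [ball]

lemma ball_connected {G : SimpleGraph V} (hG : G.Connected) (v : V) (p : ℕ) :
    (G.induce (ball G v p)).Connected := by
  apply G.induce_connected_of_patches v (center_mem_ball G v p)
  intro x hx
  obtain ⟨w, hw⟩ := hG.exists_walk_length_eq_dist v x
  refine ⟨{y | y ∈ w.support}, ?_, w.start_mem_support, w.end_mem_support,
    w.connected_induce_support _ _⟩
  intro y hy
  have h1 := G.dist_le (w.takeUntil y hy)
  have h2 := w.length_takeUntil_le_length hy
  have h3 : G.dist v x ≤ p := hx
  change G.dist v y ≤ p
  omega

lemma dist_eq_of_disjoint_of_adj {G : SimpleGraph V} (hG : G.Connected) {u v : V} {p q : ℕ}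
    (hd : Disjoint (ball G u p) (ball G v q)) {x y : V} (hx : x ∈ ball G u p)
    (hy : y ∈ ball G v q) (hxy : G.Adj x y) : G.dist u v = p + q + 1 := by
  have hx' : G.dist u x ≤ p := hx
  have hy' : G.dist v y ≤ q := hy
  apply le_antisymm
  · have h1 : G.dist u v ≤ G.dist u x + G.dist x v := hG.dist_triangle
    have h2 : G.dist x v ≤ G.dist x y + G.dist y v := hG.dist_triangle
    have h3 : G.dist x y = 1 := SimpleGraph.dist_eq_one_iff_adj.mpr hxy
    have h4 : G.dist y v = G.dist v y := SimpleGraph.dist_comm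
    omega
  · -- On a shorter geodesic, the vertex `p` steps from `u` would lie in both balls.
    by_contra! hlt
    obtain ⟨w, hw⟩ := hG.exists_walk_length_eq_dist u v
    refine Set.disjoint_left.mp hd (?_ : w.getVert p ∈ ball G u p) ?_
    · have h1 := G.dist_le (w.take p)
      rw [w.take_length] at h1
      exact h1.trans inf_le_left
    · have h1 := G.dist_le (w.drop p)
      rw [w.drop_length, SimpleGraph.dist_comm] at h1
      change G.dist v (w.getVert p) ≤ q
      omega

/-- A connected subset of `S` with no edge to the rest of `S` is a component of `S`. -/
lemma isCompOf_of_no_edge {G : SimpleGraph V} {S C : Set V} (hCS : C ⊆ S)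
    (hC : (G.induce C).Connected) (hedge : ∀ x ∈ C, ∀ y ∈ S, y ∉ C → ¬ G.Adj x y) :
    IsCompOf G S C := by
  obtain ⟨x, hx⟩ := hC.nonempty
  refine ⟨⟨x, hx⟩, hCS, hC, fun D hCD hDS hD => Set.Subset.antisymm (fun y hy => ?_) hCD⟩
  by_contra hyC
  obtain ⟨w⟩ := hD.preconnected ⟨x, hCD hx⟩ ⟨y, hy⟩
  obtain ⟨d, -, h1, h2⟩ := w.exists_boundary_dart {z | z.1 ∈ C} hx hyC
  exact hedge _ h1 _ (hDS d.snd.2) h2 d.adj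

/-- The union of the balls of the broadcast `f` around `a j`, for `p ≤ j < q`. -/
def span (G : SimpleGraph V) (f : V → ℕ) (a : ℕ → V) (p q : ℕ) : Set V :=
  {x | ∃ j, p ≤ j ∧ j < q ∧ x ∈ ball G (a j) (f (a j))}

lemma span_connected {G : SimpleGraph V} (hG : G.Connected) (f : V → ℕ) (a : ℕ → V) {p q : ℕ}
    (hpq : p < q)
    (hadj : ∀ j, p ≤ j → j + 1 < q → DomAdj G f (a j) (a (j + 1))) :
    (G.induce (span G f a p q)).Connected := by
  induction q, hpq using Nat.le_induction with
  | base =>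
    have : span G f a p (p + 1) = ball G (a p) (f (a p)) := by
      ext x
      constructor
      · rintro ⟨j, h1, h2, h3⟩
        obtain rfl : j = p := by omega
        exact h3
      · exact fun h => ⟨p, le_rfl, by omega, h⟩
    rw [this]
    exact ball_connected hG _ _
  | succ q hq ih =>
    have : span G f a p (q + 1) = span G f a p q ∪ ball G (a q) (f (a q)) := by
      ext x
      constructor
      · rintro ⟨j, h1, h2, h3⟩
        rcases Nat.lt_succ_iff_lt_or_eq.mp h2 with h | rfl
        · exact Or.inl ⟨j, h1, h, h3⟩
        · exact Or.inr h3
      · rintro (⟨j, h1, h2, h3⟩ | h)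
        · exact ⟨j, h1, by omega, h3⟩
        · exact ⟨q, by omega, by omega, h⟩
    rw [this]
    have hq' : q - 1 + 1 = q := by omega
    obtain ⟨-, -, -, x, hx, y, hy, hxy⟩ := hadj (q - 1) (by omega) (by omega)
    rw [hq'] at hy
    exact SimpleGraph.connected_induce_union
      (ih fun j h1 h2 => hadj j h1 (by omega)).preconnected
      (ball_connected hG _ _).preconnected ⟨q - 1, by omega, by omega, hx⟩ hy hxy

end BD

/-- Every efficient dominating broadcast of `H` whose domination graph is a
path appears as a source-to-sink directed path of the state digraph `D(H)` with the same
total weight. -/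
theorem broadcast_gives_path {V : Type*} [Fintype V] (H : SimpleGraph V)
    (hconn : H.Connected) (hcard : 1 < Fintype.card V)
    (f : V → ℕ) (hdom : BD.Dominating H f) (heff : BD.Efficient H f)
    (hps : BD.PathShaped H f) :
    ∃ (t : ℕ) (σ : ℕ → BD.GState H), 1 ≤ t ∧
      (∀ i, i + 1 < t → BD.Arc (σ i) (σ (i + 1))) ∧
      (σ 0).L = ∅ ∧ (σ (t - 1)).R = ∅ ∧
      (∑ i ∈ Finset.range t, (σ i).r) = BD.cost f := by
  obtain ⟨t, a, ht, hinj, hact, hpath⟩ := hps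
  have hpos : ∀ i, i < t → 0 < f (a i) := fun i hi => (hact _).mpr ⟨i, hi, rfl⟩
  have hne : ∀ i j, i < t → j < t → i ≠ j → a i ≠ a j := fun i j hi hj h e =>
    h (hinj i j hi hj e)
  have hcover : ∀ x, ∃ j, j < t ∧ x ∈ BD.ball H (a j) (f (a j)) := by
    intro x
    obtain ⟨v, hv, hx⟩ := hdom x
    obtain ⟨j, hj, rfl⟩ := (hact v).mp hv
    exact ⟨j, hj, hx⟩
  have huniq : ∀ i j x, i < t → j < t → x ∈ BD.ball H (a i) (f (a i)) →
      x ∈ BD.ball H (a j) (f (a j)) → i = j := by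
    intro i j x hi hj hx hy
    by_contra h
    exact Set.disjoint_left.mp
      (heff _ _ (hpos i hi) (hpos j hj) (hne i j hi hj h)) hx hy
  have hadj : ∀ i j x y, i < t → j < t → i ≠ j → x ∈ BD.ball H (a i) (f (a i)) →
      y ∈ BD.ball H (a j) (f (a j)) → H.Adj x y → i + 1 = j ∨ j + 1 = i := by
    intro i j x y hi hj hij hx hy hxy
    exact (hpath i j hi hj).mp
      ⟨hpos i hi, hpos j hj, hne i j hi hj hij, x, hx, y, hy, hxy⟩
  have hcons : ∀ j, j + 1 < t → BD.DomAdj H f (a j) (a (j + 1)) := fun j hj =>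
    (hpath j (j + 1) (by omega) hj).mpr (Or.inl rfl)
  have hstate : ∀ i, ∃ s : BD.GState H, i < t →
      s.c = a i ∧ s.r = f (a i) ∧ s.L = BD.span H f a 0 i ∧
        s.R = BD.span H f a (i + 1) t := by
    have key : ∀ i, i < t → ∃ s : BD.GState H,
        s.c = a i ∧ s.r = f (a i) ∧ s.L = BD.span H f a 0 i ∧
          s.R = BD.span H f a (i + 1) t := by
      intro i hi
      have hunion : BD.span H f a 0 i ∪ BD.span H f a (i + 1) t =
          (BD.ball H (a i) (f (a i)))ᶜ := by
        ext x
        constructor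
        · rintro (⟨j, h1, h2, h3⟩ | ⟨j, h1, h2, h3⟩) hx
          · have := huniq i j x hi (by omega) hx h3
            omega
          · have := huniq i j x hi h2 hx h3
            omega
        · intro hx
          obtain ⟨j, hj, hxj⟩ := hcover x
          rcases lt_trichotomy j i with h | rfl | h
          · exact Or.inl ⟨j, by omega, h, hxj⟩
          · exact absurd hxj hx
          · exact Or.inr ⟨j, h, hj, hxj⟩
      have hnoedge : ∀ x ∈ BD.span H f a 0 i, ∀ y ∈ BD.span H f a (i + 1) t,
          ¬ H.Adj x y := by
        rintro x ⟨j, h1, h2, h3⟩ y ⟨k, h4, h5, h6⟩ hxy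
        have := hadj j k x y (by omega) h5 (by omega) h3 h6 hxy
        omega
      refine ⟨⟨a i, f (a i), BD.span H f a 0 i, BD.span H f a (i + 1) t, hpos i hi,
        ?_, hunion, ?_, ?_⟩, rfl, rfl, rfl, rfl⟩
      · ext x
        simp only [Set.mem_inter_iff, Set.mem_empty_iff_false, iff_false]
        rintro ⟨⟨j, h1, h2, h3⟩, k, h4, h5, h6⟩
        have := huniq j k x (by omega) h5 h3 h6
        omega
      · rcases Nat.eq_zero_or_pos i with rfl | hi0
        · left
          ext x
          simp [BD.span]
        · right
          refine BD.isCompOf_of_no_edge (hunion ▸ Set.subset_union_left)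
            (BD.span_connected hconn f a hi0 fun j _ hj => hcons j (by omega)) ?_
          intro x hx y hy hyC
          rw [← hunion] at hy
          exact hnoedge x hx y (hy.resolve_left hyC)
      · rcases Nat.lt_or_ge (i + 1) t with hi1 | hi1
        · right
          refine BD.isCompOf_of_no_edge (hunion ▸ Set.subset_union_right)
            (BD.span_connected hconn f a hi1 fun j _ hj => hcons j hj) ?_
          intro x hx y hy hyC hxy
          rw [← hunion] at hy
          exact hnoedge y (hy.resolve_right hyC) x hx hxy.symm
        · left
          ext x
          simp only [Set.mem_empty_iff_false, iff_false]
          rintro ⟨j, h1, h2, -⟩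
          omega
    intro i
    by_cases hi : i < t
    · obtain ⟨s, hs⟩ := key i hi
      exact ⟨s, fun _ => hs⟩
    · obtain ⟨s, -⟩ := key 0 ht
      exact ⟨s, fun h => absurd h hi⟩
  choose σ hσ using hstate
  refine ⟨t, σ, ht, ?_, ?_, ?_, ?_⟩
  · intro i hi
    obtain ⟨c1, r1, L1, R1⟩ := hσ i (by omega)
    obtain ⟨c2, r2, L2, R2⟩ := hσ (i + 1) hi
    obtain ⟨-, -, -, x, hx, y, hy, hxy⟩ := hcons i hi
    have hc2 : a (i + 1) ∈ BD.span H f a (i + 1) t :=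
      ⟨i + 1, le_rfl, hi, BD.center_mem_ball _ _ _⟩
    have hc1 : a i ∈ BD.span H f a 0 (i + 1) :=
      ⟨i, by omega, by omega, BD.center_mem_ball _ _ _⟩
    unfold BD.Arc BD.Xball
    rw [c1, r1, R1, c2, r2, L2]
    refine ⟨⟨_, hc2⟩, ⟨_, hc1⟩, ?_, hc2, hc1, ?_, ?_⟩
    · exact BD.dist_eq_of_disjoint_of_adj hconn
        (heff _ _ (hpos i (by omega)) (hpos _ hi) (hne _ _ (by omega) hi (by omega)))
        hx hy hxy
    · rintro z ⟨⟨-, u, hu, huz⟩, j, h1, h2, hz⟩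
      have := hadj i j u z (by omega) h2 (by omega) hu hz huz
      obtain rfl : j = i + 1 := by omega
      exact hz
    · rintro z ⟨⟨-, u, hu, huz⟩, j, h1, h2, hz⟩
      have := hadj (i + 1) j u z hi (by omega) (by omega) hu hz huz
      obtain rfl : j = i := by omega
      exact hz
  · rw [(hσ 0 ht).2.2.1]
    ext x
    simp [BD.span]
  · rw [(hσ (t - 1) (by omega)).2.2.2]
    ext x
    simp only [Set.mem_empty_iff_false, iff_false]
    rintro ⟨j, h1, h2, -⟩
    omega
  · rw [Finset.sum_congr rfl fun i hi => (hσ i (Finset.mem_range.mp hi)).2.1]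
    have hinj' : Set.InjOn a (Finset.range t) := fun i hi j hj e =>
      hinj i j (Finset.mem_range.mp hi) (Finset.mem_range.mp hj) e
    rw [← Finset.sum_image (f := f) hinj']
    refine Finset.sum_subset (Finset.subset_univ _) fun v _ hv => ?_
    by_contra h
    obtain ⟨i, hi, rfl⟩ := (hact v).mp (Nat.pos_of_ne_zero h)
    exact hv (Finset.mem_image_of_mem a (Finset.mem_range.mpr hi))
end
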